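/- arXiv:1607.08276 — 3 statements merged into one kernel-verified Lean document; each statement's English description precedes it below -/
import Mathlib

section
/- Let M and H be 3-Lie algebras over a field F with char F ≠ 2, let ρ : M × M → Der(H) be bilinear skew-symmetric and β : M × H → Der(H) bilinear (so each ρ(x,y) and β(x,h) is a derivation of H). Assume that for all x, y ∈ M and h1, h2, h ∈ H: β(y,h2)β(x,h1)h − β(y,h)β(x,h1)h2 − β(x,h1)β(y,h2)h = [ρ(x,y)h1, h2, h]_H. Then for all x, y ∈ M and h1, h2, h ∈ H: ρ(x,y)[h1,h2,h]_H + β(y,h1)β(x,h2)h − β(x,h1)β(y,h2)h = [ρ(x,y)h1, h2, h]_H. -/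
/-
Fix `x`, `y` and write `S(a,b,c) = β(y,a)β(x,b)c`, `T(a,b,c) = β(x,a)β(y,b)c`,
`P(a,b,c) = [ρ(x,y)a,b,c]`, and `σ` for cyclic sums. The hypothesis forces `S` and `T` to be
skew-symmetric in their last two arguments and then reads `P = S - T - σS`. Exchanging `x` and `y`
turns it into `-P = T - S - σT`, whence `σS + σT = 0`. As `ρ(x,y)` is a derivation,
`ρ(x,y)[a,b,c] = σP = σS - σT - 3σS = -σS`, so `P = S - T - σS` is the claim.
-/

/-- A trilinear skew-symmetric bracket satisfying the fundamental identity,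
i.e. a 3-Lie algebra structure on `A` over the field `F`.  (Linearity in the
first argument together with skew-symmetry yields trilinearity.) -/
def IsThreeLieBracket (F : Type*) [Field F] {A : Type*} [AddCommGroup A] [Module F A]
    (br : A → A → A → A) : Prop :=
  (∀ x x' y z : A, br (x + x') y z = br x y z + br x' y z) ∧
  (∀ (c : F) (x y z : A), br (c • x) y z = c • br x y z) ∧
  (∀ x y z : A, br y x z = - br x y z) ∧
  (∀ x y z : A, br x z y = - br x y z) ∧
  (∀ x y z u v : A, br (br x y z) u v =
      br (br x u v) y z + br x (br y u v) z + br x y (br z u v))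

/-- A derivation of a 3-Lie algebra `(A, br)`. -/
def IsDer3 (F : Type*) [Field F] {A : Type*} [AddCommGroup A] [Module F A]
    (br : A → A → A → A) (d : A →ₗ[F] A) : Prop :=
  ∀ x y z : A, d (br x y z) = br (d x) y z + br x (d y) z + br x y (d z)

/-- A representation of the 3-Lie algebra `(A, br)` on the vector space `V`. -/
def IsRep3 (F : Type*) [Field F] {A V : Type*} [AddCommGroup A] [Module F A]
    [AddCommGroup V] [Module F V]
    (br : A → A → A → A) (ρ : A →ₗ[F] A →ₗ[F] Module.End F V) : Prop :=
  (∀ x y : A, ρ x y = - ρ y x) ∧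
  (∀ x1 x2 x3 x4 : A, ρ x1 x2 * ρ x3 x4 - ρ x3 x4 * ρ x1 x2
      = ρ (br x1 x2 x3) x4 - ρ (br x1 x2 x4) x3) ∧
  (∀ x1 x2 x3 x4 : A, ρ (br x1 x2 x3) x4
      = ρ x1 x2 * ρ x3 x4 + ρ x2 x3 * ρ x1 x4 + ρ x3 x1 * ρ x2 x4)

/-- The bracket of the `(μ, ρ, β)`-extension of `H` by `M`, on `M ⊕ H`:
the unique trilinear skew-symmetric bracket with `[x,y,z] = [x,y,z]_M + μ(x,y,z)`,
`[x,y,h] = ρ(x,y)h`, `[x,h₁,h₂] = β(x,h₁)h₂` and `[h₁,h₂,h₃] = [h₁,h₂,h₃]_H`. -/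
def extBr (F : Type*) [Field F] {M H : Type*} [AddCommGroup M] [Module F M]
    [AddCommGroup H] [Module F H]
    (brM : M → M → M → M) (brH : H → H → H → H)
    (μ : M →ₗ[F] M →ₗ[F] M →ₗ[F] H)
    (ρ : M →ₗ[F] M →ₗ[F] Module.End F H)
    (β : M →ₗ[F] H →ₗ[F] Module.End F H) :
    M × H → M × H → M × H → M × H :=
  fun a b c =>
    (brM a.1 b.1 c.1,
     μ a.1 b.1 c.1 + ρ a.1 b.1 c.2 + ρ c.1 a.1 b.2 + ρ b.1 c.1 a.2
       + β a.1 b.2 c.2 + β b.1 c.2 a.2 + β c.1 a.2 b.2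
       + brH a.2 b.2 c.2)

/-- The bracket of the exterior direct sum 3-Lie algebra `A³ = A × A × A`. -/
def tripleBr {A : Type*} [AddCommGroup A]
    (br : A → A → A → A) : A × A × A → A × A × A → A × A × A → A × A × A :=
  fun a b c =>
    (br a.1 b.2.1 c.2.1 + br b.1 c.2.1 a.2.1 + br c.1 a.2.1 b.2.1,
     br a.2.1 b.2.1 c.2.1,
     br a.2.2 b.2.2 c.2.2)

/-- The sum of a ternary function over the cyclic permutations of its arguments. A derivation `d`
of a skew-symmetric bracket acts on it by the cyclic sum of `(a, b, c) ↦ [d a, b, c]`. -/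
def cyclicSum {α G : Type*} [AddCommGroup G] (f : α → α → α → G) (a b c : α) : G :=
  f a b c + f b c a + f c a b

theorem derivation_apply_eq_cyclicSum {H : Type*} [AddCommGroup H] {br : H → H → H → H}
    (skew_left : ∀ a b c, br b a c = -br a b c) (skew_right : ∀ a b c, br a c b = -br a b c)
    {d : H → H} (hd : ∀ a b c, d (br a b c) = br (d a) b c + br a (d b) c + br a b (d c))
    (a b c : H) :
    d (br a b c) = cyclicSum (fun a b c ↦ br (d a) b c) a b c := by
  have rotate_second : br a (d b) c = br (d b) c a := by
    rw [skew_left (d b) a c, skew_right (d b) c a, neg_neg]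
  have rotate_third : br a b (d c) = br (d c) a b := by
    rw [skew_right a (d c) b, skew_left (d c) a b, neg_neg]
  rw [hd, rotate_second, rotate_third, cyclicSum]

section Compatibility

variable {M α G : Type*} [AddCommGroup G]

/-- The relation that the hypothesis `β(y,b)β(x,a)c - β(y,c)β(x,a)b - β(x,a)β(y,b)c = [ρ(x,y)a,b,c]`
imposes between `P x y a b c = [ρ(x,y)a,b,c]` and `B x y a b c = β(x,a)β(y,b)c`. -/
def IsCompatible (P B : M → M → α → α → α → G) : Prop :=
  ∀ x y a b c, B y x b a c - B y x c a b - B x y a b c = P x y a b c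

namespace IsCompatible

variable {P B : M → M → α → α → α → G}

theorem skew_right (compat : IsCompatible P B)
    (P_skew_right : ∀ x y a b c, P x y a c b = -P x y a b c)
    (x y : M) (a b c : α) : B x y a c b = -B x y a b c := by
  linear_combination (norm := module)
    -compat x y a b c - compat x y a c b - P_skew_right x y a b c

theorem eq_sub_sub_cyclicSum (compat : IsCompatible P B)
    (P_skew_right : ∀ x y a b c, P x y a c b = -P x y a b c)
    (x y : M) (a b c : α) :
    P x y a b c = B y x a b c - B x y a b c - cyclicSum (B y x) a b c := by
  have B_skew_right := compat.skew_right P_skew_right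
  rw [← compat x y a b c, B_skew_right y x b c a, cyclicSum]
  abel

theorem cyclicSum_swap (compat : IsCompatible P B)
    (P_swap : ∀ x y a b c, P x y a b c = -P y x a b c)
    (P_skew_right : ∀ x y a b c, P x y a c b = -P x y a b c)
    (x y : M) (a b c : α) : cyclicSum (B x y) a b c = -cyclicSum (B y x) a b c := by
  have P_eq := compat.eq_sub_sub_cyclicSum P_skew_right
  linear_combination (norm := module) P_eq x y a b c + P_eq y x a b c - P_swap x y a b c

theorem cyclicSum_eq_neg_cyclicSum (compat : IsCompatible P B)
    (P_swap : ∀ x y a b c, P x y a b c = -P y x a b c)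
    (P_skew_right : ∀ x y a b c, P x y a c b = -P x y a b c)
    (x y : M) (a b c : α) : cyclicSum (P x y) a b c = -cyclicSum (B y x) a b c := by
  have P_eq := compat.eq_sub_sub_cyclicSum P_skew_right
  calc cyclicSum (P x y) a b c
      = -(2 • cyclicSum (B y x) a b c) - cyclicSum (B x y) a b c := by
        simp only [cyclicSum, P_eq]
        abel
    _ = -cyclicSum (B y x) a b c := by
        rw [compat.cyclicSum_swap P_swap P_skew_right x y]
        abel

end IsCompatible

end Compatibility

theorem IsThreeLieBracket.neg_left {F A : Type*} [Field F] [AddCommGroup A] [Module F A]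
    {br : A → A → A → A} (hbr : IsThreeLieBracket F br) (x y z : A) :
    br (-x) y z = -br x y z := by
  simpa only [neg_one_smul] using hbr.2.1 (-1) x y z

theorem stmt3_general {M H : Type*} [AddCommGroup H] {br : H → H → H → H}
    (neg_left : ∀ a b c, br (-a) b c = -br a b c)
    (skew_left : ∀ a b c, br b a c = -br a b c)
    (skew_right : ∀ a b c, br a c b = -br a b c)
    {ρ : M → M → H → H} (ρ_swap : ∀ x y a, ρ x y a = -ρ y x a)
    (ρ_der : ∀ x y a b c,
      ρ x y (br a b c) = br (ρ x y a) b c + br a (ρ x y b) c + br a b (ρ x y c))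
    {β : M → H → H → H}
    (compat : ∀ x y a b c,
      β y b (β x a c) - β y c (β x a b) - β x a (β y b c) = br (ρ x y a) b c)
    (x y : M) (a b c : H) :
    ρ x y (br a b c) + β y a (β x b c) - β x a (β y b c) = br (ρ x y a) b c := by
  let P x y a b c := br (ρ x y a) b c
  let B x y a b c := β x a (β y b c)
  have PB_compat : IsCompatible P B := compat
  have P_swap (x y : M) (a b c : H) : P x y a b c = -P y x a b c := by
    simp only [P, ρ_swap x y, neg_left]
  have P_skew_right (x y : M) (a b c : H) : P x y a c b = -P x y a b c :=
    skew_right (ρ x y a) b c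
  calc ρ x y (br a b c) + B y x a b c - B x y a b c
      = cyclicSum (P x y) a b c + B y x a b c - B x y a b c := by
        rw [derivation_apply_eq_cyclicSum skew_left skew_right (ρ_der x y)]
    _ = B y x a b c - B x y a b c - cyclicSum (B y x) a b c := by
        rw [PB_compat.cyclicSum_eq_neg_cyclicSum P_swap P_skew_right]
        abel
    _ = P x y a b c := (PB_compat.eq_sub_sub_cyclicSum P_skew_right x y a b c).symm

/-- Lemma 3.3: if `β(y,h₂)β(x,h₁)h − β(y,h)β(x,h₁)h₂ − β(x,h₁)β(y,h₂)h = [ρ(x,y)h₁,h₂,h]_H`,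
then `ρ(x,y)[h₁,h₂,h]_H + β(y,h₁)β(x,h₂)h − β(x,h₁)β(y,h₂)h = [ρ(x,y)h₁,h₂,h]_H`. -/
theorem stmt3 {F M H : Type*} [Field F] [AddCommGroup M] [Module F M]
    [AddCommGroup H] [Module F H] (hchar : (2 : F) ≠ 0)
    (brM : M → M → M → M) (hM : IsThreeLieBracket F brM)
    (brH : H → H → H → H) (hH : IsThreeLieBracket F brH)
    (ρ : M →ₗ[F] M →ₗ[F] Module.End F H)
    (hρskew : ∀ x y : M, ρ x y = - ρ y x)
    (hρder : ∀ x y : M, IsDer3 F brH (ρ x y))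
    (β : M →ₗ[F] H →ₗ[F] Module.End F H)
    (hβder : ∀ (x : M) (h : H), IsDer3 F brH (β x h))
    (hyp : ∀ (x y : M) (h1 h2 h : H),
      β y h2 (β x h1 h) - β y h (β x h1 h2) - β x h1 (β y h2 h)
        = brH (ρ x y h1) h2 h) :
    ∀ (x y : M) (h1 h2 h : H),
      ρ x y (brH h1 h2 h) + β y h1 (β x h2 h) - β x h1 (β y h2 h)
        = brH (ρ x y h1) h2 h :=
  stmt3_general hH.neg_left hH.2.2.1 hH.2.2.2.1
    (fun x y ↦ LinearMap.congr_fun (hρskew x y)) hρder (β := fun x a ↦ β x a) hyp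
end

section
/- Let A be a 3-Lie algebra over a field F with char F ≠ 2. Then A³ = A × A × A, equipped with the bracket [(x1,y1,z1),(x2,y2,z2),(x3,y3,z3)] = ([x1,y2,y3] + [x2,y3,y1] + [x3,y1,y2], [y1,y2,y3], [z1,z2,z3]), is a 3-Lie algebra: this bracket is trilinear, skew-symmetric, and satisfies the fundamental identity. -/
/-!
The middle and first coordinates of `A³` form the semidirect product `A ⋉ A` of `A` with its adjoint
representation (the middle coordinate acting on the first), and the last coordinate is an
independent copy of `A`. So `A³` is isomorphic to the direct product `(A ⋉ A) × A`, and the theorem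
reduces to two facts: a representation of a 3-Lie algebra gives a semidirect product, and the
adjoint map is a representation.
-/

section ThreeLie

variable {F A B V : Type*} [Field F] [AddCommGroup A] [Module F A] [AddCommGroup B] [Module F B]
  [AddCommGroup V] [Module F V]

namespace IsThreeLieBracket

variable {br : A → A → A → A} (h : IsThreeLieBracket F br)
include h

theorem add_left (x x' y z : A) : br (x + x') y z = br x y z + br x' y z :=
  h.1 x x' y z

theorem smul_left (c : F) (x y z : A) : br (c • x) y z = c • br x y z :=
  h.2.1 c x y z

theorem swap_left (x y z : A) : br y x z = -br x y z :=
  h.2.2.1 x y z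

theorem swap_right (x y z : A) : br x z y = -br x y z :=
  h.2.2.2.1 x y z

theorem fundamental_identity (x y z u v : A) :
    br (br x y z) u v = br (br x u v) y z + br x (br y u v) z + br x y (br z u v) :=
  h.2.2.2.2 x y z u v

theorem rotate (x y z : A) : br y z x = br x y z := by
  rw [h.swap_right y x z, h.swap_left x y z, neg_neg]

theorem add_middle (x y y' z : A) : br x (y + y') z = br x y z + br x y' z := by
  simp only [← h.rotate x, h.add_left]

theorem smul_middle (c : F) (x y z : A) : br x (c • y) z = c • br x y z := by
  simp only [← h.rotate x, h.smul_left]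

theorem add_right (x y z z' : A) : br x y (z + z') = br x y z + br x y z' := by
  simp only [← h.rotate x, h.add_middle]

theorem smul_right (c : F) (x y z : A) : br x y (c • z) = c • br x y z := by
  simp only [← h.rotate x, h.smul_middle]

theorem leibniz (u v x y z : A) :
    br u v (br x y z) = br (br u v x) y z + br x (br u v y) z + br x y (br u v z) := by
  rw [h.rotate (br x y z) u v, h.rotate x u v, h.rotate y u v, h.rotate z u v,
    h.fundamental_identity]

theorem of_injective {br' : B → B → B → B} (f : B →ₗ[F] A) (hf : Function.Injective f)
    (hbr : ∀ x y z, f (br' x y z) = br (f x) (f y) (f z)) : IsThreeLieBracket F br' := by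
  refine ⟨fun x x' y z => hf ?_, fun c x y z => hf ?_, fun x y z => hf ?_, fun x y z => hf ?_,
    fun x y z u v => hf ?_⟩
  · simp only [hbr, map_add, h.add_left]
  · simp only [hbr, map_smul, h.smul_left]
  · simp only [hbr, map_neg, h.swap_left (f x)]
  · simp only [hbr, map_neg, h.swap_right _ (f y)]
  · simp only [hbr, map_add]
    exact h.fundamental_identity _ _ _ _ _

end IsThreeLieBracket

/-- The componentwise bracket on the direct product of two 3-Lie algebras. -/
def prodBr (brA : A → A → A → A) (brB : B → B → B → B) (a b c : A × B) : A × B :=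
  (brA a.1 b.1 c.1, brB a.2 b.2 c.2)

theorem IsThreeLieBracket.prod {brA : A → A → A → A} {brB : B → B → B → B}
    (hA : IsThreeLieBracket F brA) (hB : IsThreeLieBracket F brB) :
    IsThreeLieBracket F (prodBr brA brB) :=
  ⟨fun _ _ _ _ => Prod.ext (hA.add_left _ _ _ _) (hB.add_left _ _ _ _),
    fun _ _ _ _ => Prod.ext (hA.smul_left _ _ _ _) (hB.smul_left _ _ _ _),
    fun _ _ _ => Prod.ext (hA.swap_left _ _ _) (hB.swap_left _ _ _),
    fun _ _ _ => Prod.ext (hA.swap_right _ _ _) (hB.swap_right _ _ _),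
    fun _ _ _ _ _ =>
      Prod.ext (hA.fundamental_identity _ _ _ _ _) (hB.fundamental_identity _ _ _ _ _)⟩

namespace IsRep3

variable {br : A → A → A → A} {ρ : A →ₗ[F] A →ₗ[F] Module.End F V} (hρ : IsRep3 F br ρ)
include hρ

theorem swap_apply (x y : A) (v : V) : ρ y x v = -ρ x y v := by
  rw [hρ.1 y x, LinearMap.neg_apply]

theorem apply_leibniz (u w x y : A) (v : V) :
    ρ u w (ρ x y v) = ρ (br u w x) y v + ρ x (br u w y) v + ρ x y (ρ u w v) := by
  have hcomm : ρ u w (ρ x y v) - ρ x y (ρ u w v) = ρ (br u w x) y v - ρ (br u w y) x v :=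
    LinearMap.congr_fun (hρ.2.1 u w x y) v
  rw [hρ.swap_apply (br u w y) x, ← sub_eq_iff_eq_add, hcomm, sub_eq_add_neg]

theorem bracket_left_apply (x y z w : A) (v : V) :
    ρ (br x y z) w v = ρ x y (ρ z w v) + ρ y z (ρ x w v) + ρ z x (ρ y w v) :=
  LinearMap.congr_fun (hρ.2.2 x y z w) v

theorem bracket_right_apply (x y z w : A) (v : V) :
    ρ w (br x y z) v = ρ x y (ρ w z v) + ρ y z (ρ w x v) + ρ z x (ρ w y v) := by
  rw [hρ.swap_apply (br x y z) w, hρ.bracket_left_apply, hρ.swap_apply w z, hρ.swap_apply w x,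
    hρ.swap_apply w y]
  simp only [map_neg, neg_add, neg_neg]

end IsRep3

/-- The bracket of the semidirect product `A ⋉ V` of a 3-Lie algebra `A` with a representation `ρ`
on `V`, encoded on `A × V` as the `(0, ρ, 0)`-extension of the abelian 3-Lie algebra `V` by `A`. -/
def semidirectBr (br : A → A → A → A) (ρ : A →ₗ[F] A →ₗ[F] Module.End F V) :
    A × V → A × V → A × V → A × V :=
  extBr F br 0 0 ρ 0

theorem semidirectBr_apply (br : A → A → A → A) (ρ : A →ₗ[F] A →ₗ[F] Module.End F V)
    (a b c : A × V) :
    semidirectBr br ρ a b c =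
      (br a.1 b.1 c.1, ρ a.1 b.1 c.2 + ρ c.1 a.1 b.2 + ρ b.1 c.1 a.2) := by
  simp [semidirectBr, extBr]

theorem semidirectBr_fundamental_identity {br : A → A → A → A}
    {ρ : A →ₗ[F] A →ₗ[F] Module.End F V} (h : IsThreeLieBracket F br) (hρ : IsRep3 F br ρ)
    (a b c d e : A × V) :
    semidirectBr br ρ (semidirectBr br ρ a b c) d e =
      semidirectBr br ρ (semidirectBr br ρ a d e) b c +
        semidirectBr br ρ a (semidirectBr br ρ b d e) c +
        semidirectBr br ρ a b (semidirectBr br ρ c d e) := by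
  simp only [semidirectBr_apply]
  refine Prod.ext (h.fundamental_identity _ _ _ _ _) ?_
  simp only [Prod.snd_add, map_add]
  -- The terms in `d.2` and `e.2` match by the formula for `ρ` at a bracket; those in `a.2`, `b.2`
  -- and `c.2` match because `ρ d.1 e.1` obeys the Leibniz rule.
  rw [hρ.bracket_left_apply a.1 b.1 c.1 d.1, hρ.bracket_right_apply a.1 b.1 c.1 e.1,
    hρ.apply_leibniz d.1 e.1 a.1 b.1, hρ.apply_leibniz d.1 e.1 c.1 a.1,
    hρ.apply_leibniz d.1 e.1 b.1 c.1, h.rotate a.1 d.1 e.1, h.rotate b.1 d.1 e.1,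
    h.rotate c.1 d.1 e.1]
  abel

theorem IsThreeLieBracket.semidirect {br : A → A → A → A}
    {ρ : A →ₗ[F] A →ₗ[F] Module.End F V} (h : IsThreeLieBracket F br) (hρ : IsRep3 F br ρ) :
    IsThreeLieBracket F (semidirectBr br ρ) := by
  refine ⟨fun a a' b c => ?_, fun k a b c => ?_, fun a b c => ?_, fun a b c => ?_,
    semidirectBr_fundamental_identity h hρ⟩ <;>
    simp only [semidirectBr_apply] <;> refine Prod.ext ?_ ?_
  · exact h.add_left _ _ _ _
  · simp only [Prod.fst_add, Prod.snd_add, map_add, LinearMap.add_apply]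
    abel
  · exact h.smul_left _ _ _ _
  · simp only [Prod.smul_fst, Prod.smul_snd, map_smul, LinearMap.smul_apply, smul_add]
  · exact h.swap_left _ _ _
  · simp only [Prod.snd_neg]
    rw [hρ.swap_apply a.1 b.1, hρ.swap_apply b.1 c.1, hρ.swap_apply c.1 a.1]
    abel
  · exact h.swap_right _ _ _
  · simp only [Prod.snd_neg]
    rw [hρ.swap_apply c.1 a.1, hρ.swap_apply a.1 b.1, hρ.swap_apply b.1 c.1]
    abel

namespace IsThreeLieBracket

variable {br : A → A → A → A}

/-- The adjoint map `(x, y) ↦ [x, y, ·]` of a 3-Lie algebra, bundled as a bilinear map into its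
endomorphisms. -/
def adjoint (h : IsThreeLieBracket F br) : A →ₗ[F] A →ₗ[F] Module.End F A :=
  LinearMap.mk₂ F
    (fun x y => { toFun := br x y, map_add' := h.add_right x y, map_smul' := (h.smul_right · x y) })
    (fun x x' y => LinearMap.ext (h.add_left x x' y))
    (fun c x y => LinearMap.ext (h.smul_left c x y))
    (fun x y y' => LinearMap.ext (h.add_middle x y y'))
    (fun c x y => LinearMap.ext (h.smul_middle c x y))

theorem adjoint_apply (h : IsThreeLieBracket F br) (x y z : A) : h.adjoint x y z = br x y z :=
  rfl

theorem isRep3_adjoint (h : IsThreeLieBracket F br) : IsRep3 F br h.adjoint := by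
  refine ⟨fun x y => LinearMap.ext fun v => ?_, fun x y z w => LinearMap.ext fun v => ?_,
    fun x y z w => LinearMap.ext fun v => ?_⟩
  · exact h.swap_left y x v
  · simp only [LinearMap.sub_apply, Module.End.mul_apply, adjoint_apply]
    rw [h.leibniz x y z w v, h.swap_left (br x y w) z v]
    abel
  · simp only [LinearMap.add_apply, Module.End.mul_apply, adjoint_apply]
    rw [h.fundamental_identity, h.rotate (br x w v) y z, ← h.rotate x (br y w v) z,
      ← h.rotate (br y w v) z x]
    abel

end IsThreeLieBracket

end ThreeLie

/-- The isomorphism `(x, y, z) ↦ ((y, x), z)` from `A³` to the direct product `(A ⋉ A) × A`. -/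
def tripleEquiv (F A : Type*) [Field F] [AddCommGroup A] [Module F A] :
    (A × A × A) ≃ₗ[F] (A × A) × A :=
  (LinearEquiv.prodAssoc F A A A).symm ≪≫ₗ
    (LinearEquiv.prodComm F A A).prodCongr (LinearEquiv.refl F A)

theorem tripleEquiv_apply (F : Type*) {A : Type*} [Field F] [AddCommGroup A] [Module F A]
    (a : A × A × A) : tripleEquiv F A a = ((a.2.1, a.1), a.2.2) :=
  rfl

theorem tripleEquiv_tripleBr {F A : Type*} [Field F] [AddCommGroup A] [Module F A]
    {br : A → A → A → A} (h : IsThreeLieBracket F br) (a b c : A × A × A) :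
    tripleEquiv F A (tripleBr br a b c) =
      prodBr (semidirectBr br h.adjoint) br
        (tripleEquiv F A a) (tripleEquiv F A b) (tripleEquiv F A c) := by
  have hfst : br a.1 b.2.1 c.2.1 + br b.1 c.2.1 a.2.1 + br c.1 a.2.1 b.2.1 =
      br a.2.1 b.2.1 c.1 + br c.2.1 a.2.1 b.1 + br b.2.1 c.2.1 a.1 := by
    rw [h.rotate a.1, h.rotate b.1, h.rotate c.1]
    abel
  simp only [tripleEquiv_apply, tripleBr, prodBr, semidirectBr_apply, h.adjoint_apply, hfst]

theorem stmt9_general {F A : Type*} [Field F] [AddCommGroup A] [Module F A]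
    (br : A → A → A → A) (hbr : IsThreeLieBracket F br) :
    IsThreeLieBracket F (tripleBr br) :=
  ((hbr.semidirect hbr.isRep3_adjoint).prod hbr).of_injective (tripleEquiv F A).toLinearMap
    (tripleEquiv F A).injective (tripleEquiv_tripleBr hbr)

/-- Theorem 4.1: for a 3-Lie algebra `A`, the exterior direct sum `A³` with the
bracket `tripleBr` is a 3-Lie algebra (trilinear, skew-symmetric, fundamental
identity). -/
theorem stmt9 {F A : Type*} [Field F] [AddCommGroup A] [Module F A]
    (hchar : (2 : F) ≠ 0)
    (br : A → A → A → A) (hbr : IsThreeLieBracket F br) :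
    IsThreeLieBracket F (tripleBr br) :=
  stmt9_general br hbr
end

section
/- Let A = M ⊕ H be a (μ,ρ)-extension of H by M (the case β = 0) which is a 3-Lie algebra, suppose (H, ρ) is an M-module, and let (σ,τ) ∈ Der(M) × Der(H). Then the pair (σ,τ) is extendable if and only if there exists a linear map γ : M → H with γ(M) ⊆ Z(H) such that for all x1, x2, x3 ∈ M: (i) τ(μ(x1,x2,x3)) + γ([x1,x2,x3]_M) = μ(σx1,x2,x3) + μ(x1,σx2,x3) + μ(x1,x2,σx3) + ρ(x1,x2)γ(x3) + ρ(x3,x1)γ(x2) + ρ(x2,x3)γ(x1); and (ii) τ∘ρ(x1,x2) − ρ(x1,x2)∘τ = ρ(σx1,x2) + ρ(x1,σx2) as linear maps H → H. -/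
/-!
An endomorphism of `M ⊕ H` that restricts to `τ` on `H` and induces `σ` on `M` is block triangular,
`x + h ↦ σ x + (γ x + τ h)`, so it is determined by its off-diagonal block `γ : M → H`. The
derivation identity is additive in its three arguments, so by cyclic symmetry it may be tested on
arguments of the types `MMM`, `MMH`, `MHH` and `HHH`. The `M`-component of type `MMM` says that `σ`
is a derivation and type `HHH` that `τ` is one; the rest are equations for `γ`. When `β = 0`, type
`MMH` no longer involves `γ`, and type `MHH` says that `γ` takes values in the center.
-/

/-- A ternary bracket on an abelian group that is additive in each argument and skew-symmetric: the
part of a 3-Lie bracket that is independent of scalars and of the fundamental identity. As in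
`IsThreeLieBracket`, additivity is recorded for the first argument only. -/
structure IsSkewTriadditive {A : Type*} [AddCommGroup A] (br : A → A → A → A) : Prop where
  add_left : ∀ x x' y z, br (x + x') y z = br x y z + br x' y z
  swap_left : ∀ x y z, br y x z = -br x y z
  swap_right : ∀ x y z, br x z y = -br x y z

theorem IsThreeLieBracket.isSkewTriadditive {F A : Type*} [Field F] [AddCommGroup A] [Module F A]
    {br : A → A → A → A} (h : IsThreeLieBracket F br) : IsSkewTriadditive br :=
  ⟨h.1, h.2.2.1, h.2.2.2.1⟩

namespace IsSkewTriadditive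

variable {A : Type*} [AddCommGroup A] {br : A → A → A → A}

theorem rotate (h : IsSkewTriadditive br) (x y z : A) : br y z x = br x y z := by
  rw [h.swap_right y x z, h.swap_left x y z, neg_neg]

theorem add_middle (h : IsSkewTriadditive br) (x y y' z : A) :
    br x (y + y') z = br x y z + br x y' z := by
  simpa only [h.rotate] using h.add_left y y' z x

theorem add_right (h : IsSkewTriadditive br) (x y z z' : A) :
    br x y (z + z') = br x y z + br x y z' := by
  simpa only [← h.rotate] using h.add_left z z' x y

theorem zero_left (h : IsSkewTriadditive br) (y z : A) : br 0 y z = 0 := by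
  simpa using h.add_left 0 0 y z

theorem zero_middle (h : IsSkewTriadditive br) (x z : A) : br x 0 z = 0 := by
  simpa using h.add_middle x 0 0 z

theorem zero_right (h : IsSkewTriadditive br) (x y : A) : br x y 0 = 0 := by
  simpa using h.add_right x y 0 0

end IsSkewTriadditive

section Triangular

variable {R M H : Type*} [Semiring R] [AddCommMonoid M] [Module R M]
  [AddCommMonoid H] [Module R H]

/-- The endomorphism `x + h ↦ σ x + (γ x + τ h)` of `M ⊕ H`, block triangular with diagonal blocks
`σ`, `τ` and off-diagonal block `γ`. -/
def triangularEnd (σ : Module.End R M) (τ : Module.End R H) (γ : M →ₗ[R] H) :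
    Module.End R (M × H) :=
  (σ ∘ₗ LinearMap.fst R M H).prod (γ.coprod τ)

@[simp]
theorem triangularEnd_apply (σ : Module.End R M) (τ : Module.End R H) (γ : M →ₗ[R] H)
    (a : M × H) : triangularEnd σ τ γ a = (σ a.1, γ a.1 + τ a.2) :=
  rfl

theorem exists_eq_triangularEnd_iff {σ : Module.End R M} {τ : Module.End R H}
    {δ : Module.End R (M × H)} :
    (∃ γ : M →ₗ[R] H, δ = triangularEnd σ τ γ) ↔
      (∀ h : H, δ (0, h) = (0, τ h)) ∧ ∀ a : M × H, (δ a).1 = σ a.1 := by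
  constructor
  · rintro ⟨γ, rfl⟩
    simp
  · rintro ⟨hτ, hσ⟩
    refine ⟨LinearMap.snd R M H ∘ₗ δ ∘ₗ LinearMap.inl R M H, LinearMap.prod_ext ?_ ?_⟩ <;>
      ext x <;> simp [hτ, hσ]

end Triangular

section Extension

variable {F M H : Type*} [Field F] [AddCommGroup M] [Module F M] [AddCommGroup H] [Module F H]

/-- A lifting cochain of `(σ, τ)` with respect to the `(μ, ρ, β)`-extension of `H` by `M`: an
off-diagonal block `γ : M → H` for which the triangular endomorphism satisfies the `H`-component of
the derivation identity on arguments of the types `MMM`, `MMH` and `MHH`. Following the cyclic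
convention of `extBr`, the bracket `[γ x, y, h]` is written `β y h (γ x)`. -/
structure IsLiftingCochain (brM : M → M → M → M) (brH : H → H → H → H)
    (μ : M →ₗ[F] M →ₗ[F] M →ₗ[F] H) (ρ : M →ₗ[F] M →ₗ[F] Module.End F H)
    (β : M →ₗ[F] H →ₗ[F] Module.End F H) (σ : Module.End F M) (τ : Module.End F H)
    (γ : M →ₗ[F] H) : Prop where
  apply_mu : ∀ x y z, τ (μ x y z) + γ (brM x y z) =
    μ (σ x) y z + μ x (σ y) z + μ x y (σ z) + ρ x y (γ z) + ρ z x (γ y) + ρ y z (γ x)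
  apply_rho : ∀ x y h, τ (ρ x y h) =
    ρ (σ x) y h + ρ x (σ y) h + ρ x y (τ h) + β x (γ y) h + β y h (γ x)
  apply_beta : ∀ x h k, τ (β x h k) =
    β (σ x) h k + β x (τ h) k + β x h (τ k) + brH (γ x) h k

variable {brM : M → M → M → M} {brH : H → H → H → H}
  {μ : M →ₗ[F] M →ₗ[F] M →ₗ[F] H} {ρ : M →ₗ[F] M →ₗ[F] Module.End F H}
  {β : M →ₗ[F] H →ₗ[F] Module.End F H} {σ : Module.End F M} {τ : Module.End F H}
  {γ : M →ₗ[F] H}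

theorem isLiftingCochain_zero_iff :
    IsLiftingCochain brM brH μ ρ 0 σ τ γ ↔
      (∀ (x : M) (a b : H), brH (γ x) a b = 0) ∧
      (∀ x y z : M, τ (μ x y z) + γ (brM x y z) =
        μ (σ x) y z + μ x (σ y) z + μ x y (σ z) + ρ x y (γ z) + ρ z x (γ y) + ρ y z (γ x)) ∧
      (∀ x y : M, τ * ρ x y - ρ x y * τ = ρ (σ x) y + ρ x (σ y)) := by
  have commutator_iff (x y : M) : τ * ρ x y - ρ x y * τ = ρ (σ x) y + ρ x (σ y) ↔
      ∀ h, τ (ρ x y h) = ρ (σ x) y h + ρ x (σ y) h + ρ x y (τ h) := by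
    simp [LinearMap.ext_iff, sub_eq_iff_eq_add]
  simp only [commutator_iff]
  constructor
  · rintro ⟨hμ, hρ, hβ⟩
    exact ⟨by simpa [eq_comm] using hβ, hμ, by simpa using hρ⟩
  · rintro ⟨hγ, hμ, hρ⟩
    exact ⟨hμ, by simpa using hρ, by simpa [eq_comm] using hγ⟩

theorem isDer3_fst_of_triangularEnd
    (hδ : IsDer3 F (extBr F brM brH μ ρ β) (triangularEnd σ τ γ)) : IsDer3 F brM σ :=
  fun x y z => congrArg Prod.fst (hδ (x, 0) (y, 0) (z, 0))

theorem isDer3_snd_of_triangularEnd (hM : IsSkewTriadditive brM)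
    (hδ : IsDer3 F (extBr F brM brH μ ρ β) (triangularEnd σ τ γ)) : IsDer3 F brH τ := by
  intro a b c
  simpa [extBr, hM.zero_left] using congrArg Prod.snd (hδ (0, a) (0, b) (0, c))

theorem isLiftingCochain_of_isDer3 (hM : IsSkewTriadditive brM) (hH : IsSkewTriadditive brH)
    (hδ : IsDer3 F (extBr F brM brH μ ρ β) (triangularEnd σ τ γ)) :
    IsLiftingCochain brM brH μ ρ β σ τ γ where
  apply_mu x y z := by
    have hMMM := congrArg Prod.snd (hδ (x, 0) (y, 0) (z, 0))
    simp only [extBr, triangularEnd_apply, Prod.mk_add_mk, map_zero, LinearMap.zero_apply, add_zero,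
      hH.zero_left, hH.zero_middle] at hMMM
    linear_combination (norm := abel) hMMM
  apply_rho x y h := by
    have hMMH := congrArg Prod.snd (hδ (x, 0) (y, 0) (0, h))
    simp only [extBr, triangularEnd_apply, Prod.mk_add_mk, map_zero, LinearMap.zero_apply, add_zero,
      zero_add, hM.zero_right, hH.zero_left, hH.zero_middle] at hMMH
    linear_combination (norm := abel) hMMH
  apply_beta x h k := by
    have hMHH := congrArg Prod.snd (hδ (x, 0) (0, h) (0, k))
    simp only [extBr, triangularEnd_apply, Prod.mk_add_mk, map_zero, LinearMap.zero_apply, add_zero,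
      zero_add, hM.zero_right, hH.zero_left] at hMHH
    linear_combination (norm := abel) hMHH

theorem IsLiftingCochain.isDer3_triangularEnd (hγ : IsLiftingCochain brM brH μ ρ β σ τ γ)
    (hH : IsSkewTriadditive brH) (hσ : IsDer3 F brM σ) (hτ : IsDer3 F brH τ) :
    IsDer3 F (extBr F brM brH μ ρ β) (triangularEnd σ τ γ) := by
  rintro ⟨x, a⟩ ⟨y, b⟩ ⟨z, c⟩
  refine Prod.ext (hσ x y z) ?_
  have hy : brH a (γ y) c = brH (γ y) c a := (hH.rotate a (γ y) c).symm
  have hz : brH a b (γ z) = brH (γ z) a b := hH.rotate (γ z) a b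
  simp only [extBr, triangularEnd_apply, Prod.snd_add, map_add, LinearMap.add_apply,
    hH.add_left, hH.add_middle, hH.add_right, hy, hz]
  linear_combination (norm := abel) hγ.apply_mu x y z
    + (hγ.apply_rho x y c + hγ.apply_rho z x b + hγ.apply_rho y z a)
    + (hγ.apply_beta x b c + hγ.apply_beta y c a + hγ.apply_beta z a b) + hτ a b c

theorem isDer3_triangularEnd_iff (hM : IsSkewTriadditive brM) (hH : IsSkewTriadditive brH) :
    IsDer3 F (extBr F brM brH μ ρ β) (triangularEnd σ τ γ) ↔
      IsDer3 F brM σ ∧ IsDer3 F brH τ ∧ IsLiftingCochain brM brH μ ρ β σ τ γ :=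
  ⟨fun hδ => ⟨isDer3_fst_of_triangularEnd hδ, isDer3_snd_of_triangularEnd hM hδ,
      isLiftingCochain_of_isDer3 hM hH hδ⟩,
    fun ⟨hσ, hτ, hγ⟩ => hγ.isDer3_triangularEnd hH hσ hτ⟩

end Extension

theorem stmt13_general {F M H : Type*} [Field F] [AddCommGroup M] [Module F M]
    [AddCommGroup H] [Module F H]
    (brM : M → M → M → M) (hM : IsSkewTriadditive brM)
    (brH : H → H → H → H) (hH : IsSkewTriadditive brH)
    (μ : M →ₗ[F] M →ₗ[F] M →ₗ[F] H) (ρ : M →ₗ[F] M →ₗ[F] Module.End F H)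
    (β : M →ₗ[F] H →ₗ[F] Module.End F H) (σ : Module.End F M) (τ : Module.End F H) :
    (∃ δ : Module.End F (M × H),
        IsDer3 F (extBr F brM brH μ ρ β) δ ∧
        (∀ h : H, δ (0, h) = (0, τ h)) ∧
        (∀ a : M × H, (δ a).1 = σ a.1)) ↔
      IsDer3 F brM σ ∧ IsDer3 F brH τ ∧
        ∃ γ : M →ₗ[F] H, IsLiftingCochain brM brH μ ρ β σ τ γ := by
  simp only [← exists_eq_triangularEnd_iff, ← exists_and_left]
  rw [exists_comm]
  simp only [exists_eq_right, isDer3_triangularEnd_iff hM hH]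

/-- Corollary 4.4: for a `(μ,ρ)`-extension 3-Lie algebra (`β = 0`) with `(H,ρ)`
an `M`-module, `(σ,τ)` is extendable iff there is a linear `γ : M → H` with
`γ(M) ⊆ Z(H)` satisfying (i) and (ii). -/
theorem stmt13 {F M H : Type*} [Field F] [AddCommGroup M] [Module F M]
    [AddCommGroup H] [Module F H] (hchar : (2 : F) ≠ 0)
    (brM : M → M → M → M) (hM : IsThreeLieBracket F brM)
    (brH : H → H → H → H) (hH : IsThreeLieBracket F brH)
    (μ : M →ₗ[F] M →ₗ[F] M →ₗ[F] H)
    (hμ12 : ∀ x y z : M, μ y x z = - μ x y z)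
    (hμ23 : ∀ x y z : M, μ x z y = - μ x y z)
    (ρ : M →ₗ[F] M →ₗ[F] Module.End F H)
    (hρskew : ∀ x y : M, ρ x y = - ρ y x)
    (hρder : ∀ x y : M, IsDer3 F brH (ρ x y))
    (hrep : IsRep3 F brM ρ)
    (hA : IsThreeLieBracket F (extBr F brM brH μ ρ 0))
    (σ : Module.End F M) (hσ : IsDer3 F brM σ)
    (τ : Module.End F H) (hτ : IsDer3 F brH τ) :
    (∃ δ : Module.End F (M × H),
        IsDer3 F (extBr F brM brH μ ρ 0) δ ∧
        (∀ h : H, δ (0, h) = (0, τ h)) ∧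
        (∀ a : M × H, (δ a).1 = σ a.1)) ↔
      (∃ γ : M →ₗ[F] H,
        (∀ (x : M) (a b : H), brH (γ x) a b = 0) ∧
        (∀ x1 x2 x3 : M,
          τ (μ x1 x2 x3) + γ (brM x1 x2 x3)
            = μ (σ x1) x2 x3 + μ x1 (σ x2) x3 + μ x1 x2 (σ x3)
              + ρ x1 x2 (γ x3) + ρ x3 x1 (γ x2) + ρ x2 x3 (γ x1)) ∧
        (∀ x1 x2 : M,
          τ * ρ x1 x2 - ρ x1 x2 * τ = ρ (σ x1) x2 + ρ x1 (σ x2))) := by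
  simpa only [hσ, hτ, true_and, isLiftingCochain_zero_iff] using
    stmt13_general brM hM.isSkewTriadditive brH hH.isSkewTriadditive μ ρ 0 σ τ
end
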